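/- Let X be a median graph and let μ be a positive finite Borel measure on [-1,1]. Then the function φ : ℕ → ℂ given by φ(n) = ∫_{[-1,1]} s^n dμ(s) belongs to R₊(X); that is, the kernel (x,y) ↦ ∫_{[-1,1]} s^{d(x,y)} dμ(s) is positive definite on X. -/

import Mathlib

/-!
Every median graph is a partial cube, and on a hypercube the kernel `s ^ d` is a product over the
coordinates of the two-point kernels with values `1` and `s`, each of which is
`(1 + s) / 2 + (1 - s) / 2 * ε x * ε y` with signs `ε = ±1`, hence positive definite for
`|s| ≤ 1`. Positive definiteness survives integration over `s`.

The isometric embedding is Djoković's: the vertices closer to `a` than to `b`, for an edge `ab`,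
form a halfspace. In a connected bipartite graph with convex halfspaces, an edge crossing from a
halfspace to its complement determines that halfspace, so a geodesic crosses each wall at most once
and the distance counts the walls separating two vertices. In a median graph halfspaces are convex,
because a violation would yield two different medians of a triple.
-/

open MeasureTheory Filter Finset
open scoped ComplexOrder

/-- The polynomials `P_n^{(q)}`. -/
noncomputable def treeP (q : ℕ) : ℕ → ℝ → ℝ
  | 0, _ => 1
  | 1, x => x
  | (n+2), x => (1 + 1/(q:ℝ)) * x * treeP q (n+1) x - (1/(q:ℝ)) * treeP q n x

/-- The polynomials `Q_n^{(q)}`. -/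
noncomputable def treeQ (q : ℕ) : ℕ → ℝ → ℝ
  | 0, _ => 1
  | 1, x => (1 + 1/(q:ℝ)) * x
  | (n+2), x => (1 + 1/(q:ℝ)) * x * treeQ q (n+1) x - (1/(q:ℝ)) * treeQ q n x

/-- A kernel `ψ` on a set `X` is positive definite. -/
def IsPDKernel {X : Type*} (ψ : X → X → ℂ) : Prop :=
  ∀ (n : ℕ) (x : Fin n → X) (z : Fin n → ℂ),
    0 ≤ ∑ i, ∑ j, ψ (x i) (x j) * (starRingEnd ℂ) (z i) * z j

/-- `G` is a `(q+1)`-homogeneous tree: connected, acyclic, every vertex has exactly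
`q+1` neighbours. -/
def IsHomTree {V : Type} (G : SimpleGraph V) (q : ℕ) : Prop :=
  G.Connected ∧ G.IsAcyclic ∧ ∀ v : V, (G.neighborSet v).ncard = q + 1

/-- `G` is a homogeneous tree of countably infinite degree. -/
def IsInfTree {V : Type} (G : SimpleGraph V) : Prop :=
  G.Connected ∧ G.IsAcyclic ∧ ∀ v : V, (G.neighborSet v).Countable ∧ (G.neighborSet v).Infinite

/-- `G` is a median graph: connected, and for all vertices `x y z` the triple
intersection of intervals `I(x,y) ∩ I(y,z) ∩ I(z,x)` has exactly one element. -/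
def IsMedianGraph {V : Type} (G : SimpleGraph V) : Prop :=
  G.Connected ∧ ∀ x y z : V, ∃! u : V,
    (G.dist x y = G.dist x u + G.dist u y ∧
     G.dist y z = G.dist y u + G.dist u z ∧
     G.dist z x = G.dist z u + G.dist u x)

section PDKernel

open scoped symmDiff

variable {X W : Type*} {ψ ψ' : X → X → ℂ}

lemma isPDKernel_one : IsPDKernel fun _ _ : X => (1 : ℂ) := by
  intro n _ z
  have hsq : ∑ i, ∑ j, (1 : ℂ) * (starRingEnd ℂ) (z i) * z j = star (∑ i, z i) * ∑ i, z i := by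
    simp only [one_mul, star_sum, Finset.sum_mul_sum, starRingEnd_apply]
  exact hsq ▸ star_mul_self_nonneg _

lemma IsPDKernel.add (hψ : IsPDKernel ψ) (hψ' : IsPDKernel ψ') :
    IsPDKernel fun x y => ψ x y + ψ' x y := by
  intro n x z
  simpa only [add_mul, Finset.sum_add_distrib] using add_nonneg (hψ n x z) (hψ' n x z)

lemma IsPDKernel.const_mul (hψ : IsPDKernel ψ) {c : ℂ} (hc : 0 ≤ c) :
    IsPDKernel fun x y => c * ψ x y := by
  intro n x z
  simpa only [mul_assoc, Finset.mul_sum] using mul_nonneg hc (hψ n x z)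

lemma IsPDKernel.conj_mul_mul (hψ : IsPDKernel ψ) (f : X → ℂ) :
    IsPDKernel fun x y => (starRingEnd ℂ) (f x) * ψ x y * f y := by
  intro n x z
  convert hψ n x fun i => f (x i) * z i using 3 with i _ j _
  rw [map_mul]
  ring

lemma IsPDKernel.integral {Ω : Type*} [MeasurableSpace Ω] {μ : Measure Ω}
    {ψ : Ω → X → X → ℂ} (hint : ∀ x y, Integrable (fun ω => ψ ω x y) μ)
    (hψ : ∀ᵐ ω ∂μ, IsPDKernel (ψ ω)) : IsPDKernel fun x y => ∫ ω, ψ ω x y ∂μ := by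
  intro n x z
  have hterm : ∀ i j, Integrable (fun ω => ψ ω (x i) (x j) * (starRingEnd ℂ) (z i) * z j) μ :=
    fun i j => ((hint _ _).mul_const _).mul_const _
  calc (0 : ℂ)
      ≤ ∫ ω, ∑ i, ∑ j, ψ ω (x i) (x j) * (starRingEnd ℂ) (z i) * z j ∂μ :=
        integral_nonneg_of_ae (hψ.mono fun ω hω => hω n x z)
    _ = ∑ i, ∑ j, (∫ ω, ψ ω (x i) (x j) ∂μ) * (starRingEnd ℂ) (z i) * z j := by
        simp only [integral_finsetSum _ fun i _ => integrable_finsetSum _ fun j _ => hterm i j,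
          integral_finsetSum _ fun j _ => hterm _ j, integral_mul_const]

open Classical in
lemma IsPDKernel.mul_ite_mem_iff_mem (hψ : IsPDKernel ψ) (S : Set X) {s : ℝ}
    (hs : s ∈ Set.Icc (-1) 1) :
    IsPDKernel fun x y => (if x ∈ S ↔ y ∈ S then 1 else (s : ℂ)) * ψ x y := by
  let ε : X → ℂ := fun x => if x ∈ S then 1 else -1
  have hadd : (0 : ℂ) ≤ ((1 + s) / 2 : ℝ) := by
    rw [Complex.zero_le_real]; linarith [hs.1]
  have hsub : (0 : ℂ) ≤ ((1 - s) / 2 : ℝ) := by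
    rw [Complex.zero_le_real]; linarith [hs.2]
  have htwo_point : ∀ x y, (if x ∈ S ↔ y ∈ S then 1 else (s : ℂ)) =
      ((1 + s) / 2 : ℝ) + ((1 - s) / 2 : ℝ) * ((starRingEnd ℂ) (ε x) * ε y) := fun x y => by
    by_cases hx : x ∈ S <;> by_cases hy : y ∈ S <;> simp [ε, hx, hy] <;> ring
  convert (hψ.const_mul hadd).add ((hψ.conj_mul_mul ε).const_mul hsub) using 3 with x y
  rw [htwo_point]
  ring

open Classical in
lemma isPDKernel_prod_ite_mem_iff_mem (F : Finset W) (A : X → Set W) {s : ℝ}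
    (hs : s ∈ Set.Icc (-1) 1) :
    IsPDKernel fun x y => ∏ w ∈ F, if w ∈ A x ↔ w ∈ A y then 1 else (s : ℂ) := by
  induction F using Finset.induction_on with
  | empty => simpa only [Finset.prod_empty] using isPDKernel_one
  | insert w F hw ih =>
    simpa only [Finset.prod_insert hw, Set.mem_ofPred_eq] using
      ih.mul_ite_mem_iff_mem {x | w ∈ A x} hs

open Classical in
lemma prod_ite_mem_iff_mem_eq_pow_ncard {R : Type*} [CommMonoid R] {S T : Set W} {F : Finset W}
    (hF : S ∆ T ⊆ F) (r : R) :
    ∏ w ∈ F, (if w ∈ S ↔ w ∈ T then 1 else r) = r ^ (S ∆ T).ncard := by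
  have hfilter : (F.filter fun w => ¬(w ∈ S ↔ w ∈ T) : Set W) = S ∆ T := by
    ext w
    have := @hF w
    grind
  rw [Finset.prod_ite, Finset.prod_const_one, one_mul, Finset.prod_const, ← hfilter,
    Set.ncard_coe_finset]

theorem isPDKernel_pow_ncard_symmDiff {A : X → Set W} (hA : ∀ x y, (A x ∆ A y).Finite) {s : ℝ}
    (hs : s ∈ Set.Icc (-1) 1) : IsPDKernel fun x y => (s : ℂ) ^ (A x ∆ A y).ncard := by
  intro n x z
  have hfin : (⋃ i, ⋃ j, A (x i) ∆ A (x j)).Finite :=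
    Set.finite_iUnion fun i => Set.finite_iUnion fun j => hA (x i) (x j)
  have hsub : ∀ i j, A (x i) ∆ A (x j) ⊆ hfin.toFinset := fun i j => by
    rw [hfin.coe_toFinset]
    exact Set.subset_iUnion₂_of_subset i j subset_rfl
  simpa only [prod_ite_mem_iff_mem_eq_pow_ncard (hsub _ _)] using
    isPDKernel_prod_ite_mem_iff_mem hfin.toFinset A hs n x z

end PDKernel

section Graph

open scoped symmDiff

universe u

variable {V : Type u} {G : SimpleGraph V}

/-- A graph is a *partial cube* if it is connected and embeds isometrically into a hypercube. The
vertices of the hypercube are encoded as subsets of its set `W` of coordinates, so that the Hamming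
distance is the cardinality of the symmetric difference. -/
def IsPartialCube (G : SimpleGraph V) : Prop :=
  G.Connected ∧ ∃ (W : Type u) (A : V → Set W), ∀ x y, (A x ∆ A y).encard = G.dist x y

theorem IsPartialCube.isPDKernel_pow_dist (hG : IsPartialCube G) {s : ℝ}
    (hs : s ∈ Set.Icc (-1) 1) : IsPDKernel fun x y => (s : ℂ) ^ G.dist x y := by
  obtain ⟨-, W, A, hA⟩ := hG
  have hfin : ∀ x y, (A x ∆ A y).Finite := fun x y => Set.finite_of_encard_eq_coe (hA x y)
  have hdist : ∀ x y, (A x ∆ A y).ncard = G.dist x y := fun x y => by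
    rw [Set.ncard, hA, ENat.toNat_natCast]
  simpa only [hdist] using isPDKernel_pow_ncard_symmDiff hfin hs

/-- The interval `I(x, y)` of a connected graph: the vertices lying on a geodesic from `x` to
`y`. -/
def geodesicInterval (G : SimpleGraph V) (x y : V) : Set V :=
  {u | G.dist x y = G.dist x u + G.dist u y}

/-- A set of vertices is geodesically convex if it contains the interval between any two of its
members. -/
def IsGeodesicallyConvex (G : SimpleGraph V) (S : Set V) : Prop :=
  ∀ ⦃x⦄, x ∈ S → ∀ ⦃y⦄, y ∈ S → geodesicInterval G x y ⊆ S

/-- The vertices strictly closer to `a` than to `b`; for an edge `ab` this is one of the two sides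
of the wall crossed by `ab`. -/
def halfspace (G : SimpleGraph V) (a b : V) : Set V :=
  {x | G.dist x a < G.dist x b}

lemma mem_geodesicInterval {u x y : V} :
    u ∈ geodesicInterval G x y ↔ G.dist x y = G.dist x u + G.dist u y :=
  .rfl

lemma mem_halfspace {a b x : V} : x ∈ halfspace G a b ↔ G.dist x a < G.dist x b :=
  .rfl

lemma geodesicInterval_comm (x y : V) : geodesicInterval G x y = geodesicInterval G y x := by
  ext u
  simp only [mem_geodesicInterval, G.dist_comm (u := y), G.dist_comm (v := x)]
  omega

lemma geodesicInterval_subset_left (hG : G.Connected) {u x y : V}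
    (hu : u ∈ geodesicInterval G x y) : geodesicInterval G x u ⊆ geodesicInterval G x y := by
  intro v hv
  have hvy := hG.dist_triangle (u := v) (v := u) (w := y)
  have hxy := hG.dist_triangle (u := x) (v := v) (w := y)
  simp only [mem_geodesicInterval] at hu hv ⊢
  omega

lemma geodesicInterval_subset_right (hG : G.Connected) {u x y : V}
    (hu : u ∈ geodesicInterval G x y) : geodesicInterval G u y ⊆ geodesicInterval G x y := by
  rw [geodesicInterval_comm u, geodesicInterval_comm x]
  exact geodesicInterval_subset_left hG (geodesicInterval_comm x y ▸ hu)

lemma left_mem_halfspace {a b : V} (hab : G.Adj a b) : a ∈ halfspace G a b := by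
  simp [mem_halfspace, SimpleGraph.dist_eq_one_iff_adj.2 hab]

lemma notMem_halfspace_of_mem_halfspace {a b x : V} (hx : x ∈ halfspace G b a) :
    x ∉ halfspace G a b :=
  (mem_halfspace.1 hx).not_gt

lemma geodesicInterval_subset_halfspace (hG : G.Connected) {a b x : V}
    (hx : x ∈ halfspace G a b) : geodesicInterval G x a ⊆ halfspace G a b := by
  intro p hp
  have hxb := hG.dist_triangle (u := x) (v := p) (w := b)
  simp only [mem_geodesicInterval, mem_halfspace] at hx hp ⊢
  omega

lemma mem_geodesicInterval_of_mem_halfspace (hG : G.Connected) {a b x : V} (hab : G.Adj a b)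
    (hx : x ∈ halfspace G a b) : a ∈ geodesicInterval G x b := by
  have hxb := hG.dist_triangle (u := x) (v := a) (w := b)
  simp only [mem_geodesicInterval, mem_halfspace,
    SimpleGraph.dist_eq_one_iff_adj.2 hab] at hx hxb ⊢
  omega

lemma isBipartite_iff_dist_ne_dist (hG : G.Connected) :
    G.IsBipartite ↔ ∀ ⦃a b⦄, G.Adj a b → ∀ x, G.dist x a ≠ G.dist x b := by
  constructor
  · rintro ⟨c⟩ a b hab x heq
    have c : G.Coloring Bool := G.recolorOfEquiv finTwoEquiv c
    obtain ⟨p, hp⟩ := hG.exists_walk_length_eq_dist x a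
    obtain ⟨q, hq⟩ := hG.exists_walk_length_eq_dist x b
    have hpc := c.even_length_iff_congr p
    have hqc := c.even_length_iff_congr q
    have hne : c a ≠ c b := c.valid hab
    rw [hp, heq, ← hq] at hpc
    grind
  · intro h
    obtain ⟨o⟩ := hG.nonempty
    let c : G.Coloring Bool := .mk (fun v => decide (Even (G.dist o v))) fun {a b} hab => by
      have hne := h hab o
      rcases hab.diff_dist_adj (u := o) with heq | heq | heq <;> grind
    simpa using c.colorable

lemma mem_halfspace_of_notMem_halfspace (hG : G.Connected) (hbip : G.IsBipartite) {a b x : V}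
    (hab : G.Adj a b) (hx : x ∉ halfspace G a b) : x ∈ halfspace G b a :=
  lt_of_le_of_ne (not_lt.1 hx) ((isBipartite_iff_dist_ne_dist hG).1 hbip hab x).symm

lemma exists_adj_dist_eq_of_dist_eq_succ (hG : G.Connected) {x y : V} {n : ℕ}
    (h : G.dist x y = n + 1) : ∃ v, G.Adj x v ∧ G.dist v y = n := by
  obtain ⟨p, hp⟩ := hG.exists_walk_length_eq_dist x y
  cases p with
  | nil => simp at h
  | @cons _ v _ hxv p =>
    have hxy := hG.dist_triangle (u := x) (v := v) (w := y)
    have hvy := SimpleGraph.dist_le p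
    rw [SimpleGraph.dist_eq_one_iff_adj.2 hxv] at hxy
    rw [SimpleGraph.Walk.length_cons] at hp
    exact ⟨v, hxv, by omega⟩

section Djokovic

/-- The image of the vertex `x` under Djoković's embedding into a hypercube. The coordinates are
the walls, each of them represented by its side not containing the base vertex `o`. -/
def separatingHalfspaces (G : SimpleGraph V) (o x : V) : Set (Set V) :=
  {H | (∃ a b, G.Adj a b ∧ halfspace G a b = H) ∧ x ∈ H ∧ o ∉ H}

lemma mem_symmDiff_separatingHalfspaces {o x y : V} {H : Set V} :
    H ∈ separatingHalfspaces G o x ∆ separatingHalfspaces G o y ↔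
      (∃ a b, G.Adj a b ∧ halfspace G a b = H) ∧ o ∉ H ∧ ¬(x ∈ H ↔ y ∈ H) := by
  simp only [Set.mem_symmDiff, separatingHalfspaces, Set.mem_ofPred_eq]
  grind

variable (hG : G.Connected) (hbip : G.IsBipartite)
  (hconv : ∀ ⦃a b⦄, G.Adj a b → IsGeodesicallyConvex G (halfspace G a b))

include hG hbip hconv

lemma halfspace_subset_halfspace_of_crossing {a b c d : V} (hab : G.Adj a b) (hcd : G.Adj c d)
    (hc : c ∈ halfspace G a b) (hd : d ∉ halfspace G a b) :
    halfspace G a b ⊆ halfspace G c d := by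
  intro x hx
  by_contra hxc
  have hdx : d ∈ geodesicInterval G x c := mem_geodesicInterval_of_mem_halfspace hG hcd.symm
    (mem_halfspace_of_notMem_halfspace hG hbip hcd hxc)
  exact hd (hconv hab hx hc hdx)

lemma halfspace_eq_halfspace_of_crossing {a b c d : V} (hab : G.Adj a b) (hcd : G.Adj c d)
    (hc : c ∈ halfspace G a b) (hd : d ∉ halfspace G a b) :
    halfspace G a b = halfspace G c d := by
  refine (halfspace_subset_halfspace_of_crossing hG hbip hconv hab hcd hc hd).antisymm ?_
  intro x hx
  by_contra hxa
  have hsub : halfspace G b a ⊆ halfspace G d c :=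
    halfspace_subset_halfspace_of_crossing hG hbip hconv hab.symm hcd.symm
      (mem_halfspace_of_notMem_halfspace hG hbip hab hd) (notMem_halfspace_of_mem_halfspace hc)
  exact notMem_halfspace_of_mem_halfspace
    (hsub (mem_halfspace_of_notMem_halfspace hG hbip hab hxa)) hx

lemma eq_halfspace_or_eq_halfspace_of_crossing {a b c d : V} (hab : G.Adj a b) (hcd : G.Adj c d)
    (hcross : ¬(c ∈ halfspace G a b ↔ d ∈ halfspace G a b)) :
    halfspace G a b = halfspace G c d ∨ halfspace G a b = halfspace G d c := by
  by_cases hc : c ∈ halfspace G a b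
  · exact .inl (halfspace_eq_halfspace_of_crossing hG hbip hconv hab hcd hc (by tauto))
  · exact .inr (halfspace_eq_halfspace_of_crossing hG hbip hconv hab hcd.symm (by tauto) hc)

lemma symmDiff_separatingHalfspaces_of_adj {o x v : V} (hxv : G.Adj x v)
    (ho : o ∉ halfspace G x v) :
    separatingHalfspaces G o x ∆ separatingHalfspaces G o v = {halfspace G x v} := by
  ext H
  rw [mem_symmDiff_separatingHalfspaces, Set.mem_singleton_iff]
  constructor
  · rintro ⟨⟨a, b, hab, rfl⟩, hoH, hcross⟩
    refine (eq_halfspace_or_eq_halfspace_of_crossing hG hbip hconv hab hxv hcross).resolve_right ?_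
    intro hH
    exact hoH (hH ▸ mem_halfspace_of_notMem_halfspace hG hbip hxv ho)
  · rintro rfl
    have hv := notMem_halfspace_of_mem_halfspace (left_mem_halfspace hxv.symm)
    exact ⟨⟨x, v, hxv, rfl⟩, ho, fun h => hv (h.1 (left_mem_halfspace hxv))⟩

lemma exists_symmDiff_separatingHalfspaces_eq_singleton (o : V) {x v : V} (hxv : G.Adj x v) :
    ∃ K, separatingHalfspaces G o x ∆ separatingHalfspaces G o v = {K} ∧
      (K = halfspace G x v ∨ K = halfspace G v x) := by
  by_cases ho : o ∈ halfspace G x v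
  · refine ⟨halfspace G v x, ?_, .inr rfl⟩
    rw [symmDiff_comm]
    exact symmDiff_separatingHalfspaces_of_adj hG hbip hconv hxv.symm
      (notMem_halfspace_of_mem_halfspace ho)
  · exact ⟨halfspace G x v, symmDiff_separatingHalfspaces_of_adj hG hbip hconv hxv ho, .inl rfl⟩

theorem encard_symmDiff_separatingHalfspaces (o x y : V) :
    (separatingHalfspaces G o x ∆ separatingHalfspaces G o y).encard = G.dist x y := by
  induction hn : G.dist x y generalizing x with
  | zero => simp [hG.dist_eq_zero_iff.1 hn]
  | succ n ih =>
    obtain ⟨v, hxv, hvy⟩ := exists_adj_dist_eq_of_dist_eq_succ hG hn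
    obtain ⟨K, hK, hK_side⟩ :=
      exists_symmDiff_separatingHalfspaces_eq_singleton hG hbip hconv o hxv
    set T := separatingHalfspaces G o v ∆ separatingHalfspaces G o y with hT
    have hv : v ∈ halfspace G v x := left_mem_halfspace hxv.symm
    have hy : y ∈ halfspace G v x := by
      rw [mem_halfspace, G.dist_comm, hvy, G.dist_comm, hn]
      exact n.lt_succ_self
    have hKT : K ∉ T := by
      rw [hT, mem_symmDiff_separatingHalfspaces]
      rcases hK_side with rfl | rfl
      · simp [notMem_halfspace_of_mem_halfspace hv, notMem_halfspace_of_mem_halfspace hy]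
      · simp [hv, hy]
    have hinsert : separatingHalfspaces G o x ∆ separatingHalfspaces G o y = insert K T :=
      calc separatingHalfspaces G o x ∆ separatingHalfspaces G o y
          = {K} ∆ T := by rw [← hK, hT, symmDiff_assoc, symmDiff_symmDiff_cancel_left]
        _ = insert K T := (Set.disjoint_singleton_left.2 hKT).symmDiff_eq_sup
    rw [hinsert, Set.encard_insert_of_notMem hKT, ih v hvy, Nat.cast_succ]

theorem isPartialCube_of_isGeodesicallyConvex_halfspace : IsPartialCube G := by
  obtain ⟨o⟩ := hG.nonempty
  exact ⟨hG, Set V, separatingHalfspaces G o,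
    encard_symmDiff_separatingHalfspaces hG hbip hconv o⟩

end Djokovic

end Graph

namespace IsMedianGraph

variable {V : Type} {G : SimpleGraph V}

lemma existsUnique_median (hG : IsMedianGraph G) (x y z : V) :
    ∃! u, u ∈ geodesicInterval G x y ∧ u ∈ geodesicInterval G y z ∧ u ∈ geodesicInterval G z x :=
  hG.2 x y z

lemma isBipartite (hG : IsMedianGraph G) : G.IsBipartite := by
  refine (isBipartite_iff_dist_ne_dist hG.1).2 fun a b hab x heq => ?_
  obtain ⟨u, ⟨huab, hubx, huxa⟩, -⟩ := hG.existsUnique_median a b x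
  have hdist : G.dist a b = 1 := SimpleGraph.dist_eq_one_iff_adj.2 hab
  have hu : a = u ∨ u = b := by
    rw [← hG.1.dist_eq_zero_iff, ← hG.1.dist_eq_zero_iff]
    rw [mem_geodesicInterval] at huab
    omega
  rcases hu with rfl | rfl
  · rw [mem_geodesicInterval, G.dist_comm (u := b) (v := x), G.dist_comm (u := b) (v := a),
      G.dist_comm (u := a) (v := x)] at hubx
    omega
  · rw [mem_geodesicInterval, G.dist_comm (u := u) (v := a)] at huxa
    omega

lemma isGeodesicallyConvex_halfspace (hG : IsMedianGraph G) {a b : V} (hab : G.Adj a b) :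
    IsGeodesicallyConvex G (halfspace G a b) := by
  intro x hx y hy u hu
  by_contra hua
  replace hua := mem_halfspace_of_notMem_halfspace hG.1 hG.isBipartite hab hua
  have ha_xb := mem_geodesicInterval_of_mem_halfspace hG.1 hab hx
  have ha_yb := mem_geodesicInterval_of_mem_halfspace hG.1 hab hy
  -- The median of `x, y, b` is both `r`, inside the halfspace, and `q`, on the same side as `u`.
  obtain ⟨m, -, hm_unique⟩ := hG.existsUnique_median x y b
  obtain ⟨r, ⟨hr_xy, hr_ya, hr_ax⟩, -⟩ := hG.existsUnique_median x y a
  obtain ⟨p, ⟨hp_xu, hp_ub, hp_bx⟩, -⟩ := hG.existsUnique_median x u b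
  obtain ⟨q, ⟨hq_yp, hq_pb, hq_by⟩, -⟩ := hG.existsUnique_median y p b
  rw [geodesicInterval_comm] at hr_ax hp_bx hq_yp hq_by
  have hrm : r = m := hm_unique r ⟨hr_xy, geodesicInterval_subset_left hG.1 ha_yb hr_ya, by
    rw [geodesicInterval_comm]; exact geodesicInterval_subset_left hG.1 ha_xb hr_ax⟩
  have hqm : q = m := by
    have hp_xy := geodesicInterval_subset_left hG.1 hu hp_xu
    refine hm_unique q ⟨geodesicInterval_subset_right hG.1 hp_xy hq_yp, hq_by, ?_⟩
    rw [geodesicInterval_comm]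
    exact geodesicInterval_subset_right hG.1 hp_bx hq_pb
  have hr : r ∈ halfspace G a b := geodesicInterval_subset_halfspace hG.1 hx hr_ax
  have hq : q ∈ halfspace G b a := geodesicInterval_subset_halfspace hG.1 hua
    (geodesicInterval_subset_right hG.1 hp_ub hq_pb)
  exact notMem_halfspace_of_mem_halfspace hq (hqm.trans hrm.symm ▸ hr)

theorem isPartialCube (hG : IsMedianGraph G) : IsPartialCube G :=
  isPartialCube_of_isGeodesicallyConvex_halfspace hG.1 hG.isBipartite
    fun _ _ => hG.isGeodesicallyConvex_halfspace

end IsMedianGraph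

theorem stmt_18_general {V : Type*} {G : SimpleGraph V} (hG : IsPartialCube G)
    (μ : Measure (Set.Icc (-1 : ℝ) 1)) [IsFiniteMeasure μ] :
    IsPDKernel (fun x y : V => ∫ s, (((s : ℝ) ^ (G.dist x y) : ℝ) : ℂ) ∂μ) := by
  refine IsPDKernel.integral (fun x y => ?_) (.of_forall fun s => ?_)
  · exact Continuous.integrable_of_hasCompactSupport (by fun_prop) (.of_compactSpace _)
  · simpa only [Complex.ofReal_pow] using hG.isPDKernel_pow_dist s.2

theorem stmt_18 (V : Type) (G : SimpleGraph V) (hG : IsMedianGraph G)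
    (μ : Measure (Set.Icc (-1 : ℝ) 1)) [IsFiniteMeasure μ] :
    IsPDKernel (fun x y : V => ∫ s, (((s : ℝ) ^ (G.dist x y) : ℝ) : ℂ) ∂μ) :=
  stmt_18_general hG.isPartialCube μ
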